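/- Fix p ∈ ℕ, t_p > t₀ and θ_p > 0, and suppose that [f(t,x)]_{n_p} ≤ A_p(t)[x]_{n_p} + B_p for all t ∈ [0,t₀] and x ∈ 𝒮, and [f(t,x)]_{n_p} ≤ C_p([x]_{n_p} + 1) for all t ∈ [t₀,t_p] and x ∈ 𝒮, where A_p ∈ L¹(0,t₀) is nonnegative and B_p, C_p ≥ 0. Then for every x ∈ C(J,𝒮), 𝒬_p(T(x)) ≤ G_p·(‖A_p‖_{L¹}·𝒫_p(x) + t₀·B_p) + C_p·(𝒬_p(x)/θ_p + t_p − t₀), where 𝒫_p(x) = max_{0≤t≤t₀} [x(t)]_{n_p}, 𝒬_p(x) = max_{t₀≤t≤t_p} e^{−θ_p(t−t₀)}[x(t)]_{n_p}, and G_p = [(𝕀 − ⟨α,𝕀⟩)^{-1}]_{n_p}·[‖α‖_*]_{n_p} + 1. -/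

import Mathlib

open Set MeasureTheory

noncomputable section

/-- Projection of `ℝ` onto the half line `J = [0, ∞)`. -/
def pj (s : ℝ) : Set.Ici (0:ℝ) := ⟨max 0 s, le_max_left 0 s⟩

/-- The seminorm `[x]ₙ = max_{1 ≤ i ≤ n} |xᵢ|` on `𝒮 = ℝ^ℕ` (components indexed from `0` to `n-1`). -/
def semS (n : ℕ) (x : ℕ → ℝ) : ℝ := ⨆ i : Fin n, |x (i : ℕ)|

/-- Restriction of the `n`-th component of `x ∈ C(J, 𝒮)` to `[0, t₀]`, as an element of `C([0,t₀], ℝ)`. -/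
def restr (t₀ : ℝ) (x : C(Set.Ici (0:ℝ), ℕ → ℝ)) (n : ℕ) : C(Set.Icc (0:ℝ) t₀, ℝ) :=
  ⟨fun s => x ⟨s.1, s.2.1⟩ n,
    ((continuous_apply n).comp x.continuous).comp
      (continuous_inclusion Set.Icc_subset_Ici_self)⟩

/-- `IsT t₀ f α T` says that `T` is the operator
`T(v)(t) = (𝕀 − ⟨α,𝕀⟩)⁻¹ · ⟨α, (∫₀^· f(s,v(s)) ds)|_{[0,t₀]}⟩ + ∫₀^t f(s,v(s)) ds`,
written componentwise; `P` is the restriction of the primitive `∫₀^· f_n(s,v(s)) ds` to `[0,t₀]`. -/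
def IsT (t₀ : ℝ) (f : ℕ → ℝ → (ℕ → ℝ) → ℝ)
    (α : ℕ → C(Set.Icc (0:ℝ) t₀, ℝ) →L[ℝ] ℝ)
    (T : C(Set.Ici (0:ℝ), ℕ → ℝ) → C(Set.Ici (0:ℝ), ℕ → ℝ)) : Prop :=
  ∀ v : C(Set.Ici (0:ℝ), ℕ → ℝ), ∀ n : ℕ,
    ∃ P : C(Set.Icc (0:ℝ) t₀, ℝ),
      (∀ s : Set.Icc (0:ℝ) t₀, P s = ∫ u in (0:ℝ)..(s : ℝ), f n u (v (pj u))) ∧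
      ∀ t : Set.Ici (0:ℝ),
        T v t n = (1 - α n 1)⁻¹ * α n P + ∫ s in (0:ℝ)..(t : ℝ), f n s (v (pj s))

/-- `𝒫ₙ(x) = max_{0 ≤ t ≤ t₀} [x(t)]ₙ`. -/
def Psem (t₀ : ℝ) (n : ℕ) (x : C(Set.Ici (0:ℝ), ℕ → ℝ)) : ℝ :=
  ⨆ t : Set.Icc (0:ℝ) t₀, semS n (x ⟨t.1, t.2.1⟩)

/-- `𝒬ₙ(x) = max_{t₀ ≤ t ≤ t_p} e^{-θ(t-t₀)} [x(t)]ₙ`. -/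
def Qsem (t₀ tp θ : ℝ) (ht₀ : 0 ≤ t₀) (n : ℕ) (x : C(Set.Ici (0:ℝ), ℕ → ℝ)) : ℝ :=
  ⨆ t : Set.Icc t₀ tp, Real.exp (-θ * (t.1 - t₀)) * semS n (x ⟨t.1, le_trans ht₀ t.2.1⟩)

/-- `Gₙ = [(𝕀 − ⟨α,𝕀⟩)⁻¹]ₙ · [‖α‖_*]ₙ + 1`. -/
def Gconst (t₀ : ℝ) (α : ℕ → C(Set.Icc (0:ℝ) t₀, ℝ) →L[ℝ] ℝ) (n : ℕ) : ℝ :=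
  semS n (fun i => (1 - α i 1)⁻¹) * semS n (fun i => ‖α i‖) + 1

theorem semS_bdd (n : ℕ) (x : ℕ → ℝ) : BddAbove (Set.range fun i : Fin n => |x (i : ℕ)|) :=
  (Set.finite_range _).bddAbove

theorem semS_nonneg (n : ℕ) (x : ℕ → ℝ) : 0 ≤ semS n x :=
  Real.iSup_nonneg fun _ => abs_nonneg _

theorem abs_le_semS {n i : ℕ} (hi : i < n) (x : ℕ → ℝ) : |x i| ≤ semS n x :=
  le_ciSup (semS_bdd n x) ⟨i, hi⟩

theorem semS_le_sum (n : ℕ) (x : ℕ → ℝ) : semS n x ≤ ∑ i ∈ Finset.range n, |x i| := by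
  refine Real.iSup_le (fun i => ?_) (Finset.sum_nonneg fun _ _ => abs_nonneg _)
  exact Finset.single_le_sum (f := fun i => |x i|) (fun _ _ => abs_nonneg _)
    (Finset.mem_range.2 i.2)

theorem semS_family_bdd {X : Type*} [TopologicalSpace X] [CompactSpace X] (n : ℕ)
    (y : X → ℕ → ℝ) (w : X → ℝ) (hy : Continuous y) (hw : Continuous w) (hw0 : ∀ t, 0 ≤ w t) :
    BddAbove (Set.range fun t => w t * semS n (y t)) := by
  have hc : Continuous fun t => w t * ∑ i ∈ Finset.range n, |y t i| := by fun_prop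
  obtain ⟨M, hM⟩ := (isCompact_range hc).bddAbove
  refine ⟨M, ?_⟩
  rintro _ ⟨t, rfl⟩
  exact (mul_le_mul_of_nonneg_left (semS_le_sum n (y t)) (hw0 t)).trans (hM ⟨t, rfl⟩)

theorem le_Psem (t₀ : ℝ) (n : ℕ) (x : C(Set.Ici (0:ℝ), ℕ → ℝ)) {s : ℝ}
    (hs : s ∈ Set.Icc (0:ℝ) t₀) : semS n (x (pj s)) ≤ Psem t₀ n x := by
  have hb := semS_family_bdd (X := Set.Icc (0:ℝ) t₀) n (fun t => x ⟨t.1, t.2.1⟩) (fun _ => 1)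
    (x.continuous.comp (continuous_inclusion Set.Icc_subset_Ici_self)) continuous_const
    (fun _ => zero_le_one)
  simp only [one_mul] at hb
  have he : pj s = ⟨s, hs.1⟩ := Subtype.ext (max_eq_right hs.1)
  rw [he]
  exact le_ciSup hb ⟨s, hs⟩

theorem le_Qsem (t₀ tp θ : ℝ) (ht₀ : 0 ≤ t₀) (n : ℕ) (x : C(Set.Ici (0:ℝ), ℕ → ℝ)) {s : ℝ}
    (hs : s ∈ Set.Icc t₀ tp) :
    semS n (x (pj s)) ≤ Real.exp (θ * (s - t₀)) * Qsem t₀ tp θ ht₀ n x := by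
  have hb := semS_family_bdd (X := Set.Icc t₀ tp) n (fun t => x ⟨t.1, le_trans ht₀ t.2.1⟩)
    (fun t => Real.exp (-θ * (t.1 - t₀)))
    (x.continuous.comp (by fun_prop)) (by fun_prop)
    (fun _ => (Real.exp_pos _).le)
  have he : pj s = ⟨s, ht₀.trans hs.1⟩ := Subtype.ext (max_eq_right (ht₀.trans hs.1))
  rw [he]
  have h : Real.exp (-θ * (s - t₀)) * semS n (x ⟨s, ht₀.trans hs.1⟩) ≤ Qsem t₀ tp θ ht₀ n x :=
    le_ciSup hb ⟨s, hs⟩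
  calc semS n (x ⟨s, ht₀.trans hs.1⟩)
      = Real.exp (θ * (s - t₀)) *
        (Real.exp (-θ * (s - t₀)) * semS n (x ⟨s, ht₀.trans hs.1⟩)) := by
        rw [← mul_assoc, ← Real.exp_add]; simp
    _ ≤ _ := mul_le_mul_of_nonneg_left h (Real.exp_pos _).le

theorem integral_exp_shift (t₀ t θ : ℝ) (hθ : 0 < θ) :
    ∫ s in t₀..t, Real.exp (θ * (s - t₀)) = (Real.exp (θ * (t - t₀)) - 1) / θ := by
  have h : ∀ s ∈ Set.uIcc t₀ t,
      HasDerivAt (fun s => Real.exp (θ * (s - t₀)) / θ) (Real.exp (θ * (s - t₀))) s := by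
    intro s _
    have h1 : HasDerivAt (fun s : ℝ => θ * (s - t₀)) (θ * 1) s :=
      ((hasDerivAt_id s).sub_const t₀).const_mul θ
    have h2 := (h1.exp).div_const θ
    refine h2.congr_deriv ?_
    rw [mul_one, mul_div_assoc, div_self hθ.ne', mul_one]
  rw [intervalIntegral.integral_eq_sub_of_hasDerivAt h
    (Continuous.intervalIntegrable (by fun_prop) _ _)]
  simp
  ring

/-- Estimate (3.10) in the proof of the main theorem:
`𝒬_p(T(x)) ≤ G_p (‖A_p‖_{L¹} 𝒫_p(x) + t₀ B_p) + C_p (𝒬_p(x)/θ_p + t_p − t₀)`. -/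
theorem statement_9
    (t₀ : ℝ) (ht₀ : 0 < t₀)
    (f : ℕ → ℝ → (ℕ → ℝ) → ℝ)
    (hf : ∀ n, ContinuousOn (fun q : ℝ × (ℕ → ℝ) => f n q.1 q.2)
      (Set.Ici (0:ℝ) ×ˢ (Set.univ : Set (ℕ → ℝ))))
    (α : ℕ → C(Set.Icc (0:ℝ) t₀, ℝ) →L[ℝ] ℝ)
    (hα : ∀ n, α n 1 ≠ 1)
    (T : C(Set.Ici (0:ℝ), ℕ → ℝ) → C(Set.Ici (0:ℝ), ℕ → ℝ))
    (hT : IsT t₀ f α T)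
    (np : ℕ → ℕ) (hnp : StrictMono np) (hnp0 : ∀ q, 0 < np q)
    (p : ℕ)
    (tp : ℝ) (htp : t₀ < tp) (θ : ℝ) (hθ : 0 < θ)
    (A : ℝ → ℝ) (B C : ℝ)
    (hA_nonneg : ∀ t ∈ Set.Icc (0:ℝ) t₀, 0 ≤ A t)
    (hA_int : IntervalIntegrable A MeasureTheory.volume 0 t₀)
    (hB : 0 ≤ B) (hC : 0 ≤ C)
    (hgrowth1 : ∀ t ∈ Set.Icc (0:ℝ) t₀, ∀ x : ℕ → ℝ,
      semS (np p) (fun i => f i t x) ≤ A t * semS (np p) x + B)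
    (hgrowth2 : ∀ t ∈ Set.Icc t₀ tp, ∀ x : ℕ → ℝ,
      semS (np p) (fun i => f i t x) ≤ C * (semS (np p) x + 1)) :
    ∀ x : C(Set.Ici (0:ℝ), ℕ → ℝ),
      Qsem t₀ tp θ ht₀.le (np p) (T x) ≤
        Gconst t₀ α (np p) * ((∫ t in (0:ℝ)..t₀, A t) * Psem t₀ (np p) x + t₀ * B) +
          C * (Qsem t₀ tp θ ht₀.le (np p) x / θ + (tp - t₀)) := by
  intro x
  have h0 := hnp0 p
  generalize np p = n at *
  set Pm := Psem t₀ n x with hPm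
  set Q := Qsem t₀ tp θ ht₀.le n x with hQ
  have hQ0 : 0 ≤ Q := Real.iSup_nonneg fun t => mul_nonneg (Real.exp_pos _).le (semS_nonneg _ _)
  have hP0 : 0 ≤ Pm := Real.iSup_nonneg fun t => semS_nonneg _ _
  set K := (∫ t in (0:ℝ)..t₀, A t) * Pm + t₀ * B with hK
  have hAi : 0 ≤ ∫ t in (0:ℝ)..t₀, A t := intervalIntegral.integral_nonneg ht₀.le hA_nonneg
  have hK0 : 0 ≤ K := by positivity
  -- integrability of the right-hand side
  have hcont : ∀ i, ContinuousOn (fun u => f i u (x (pj u))) (Set.Ici 0) := by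
    intro i
    have hpj : Continuous pj := by unfold pj; fun_prop
    have hm : Continuous fun u : ℝ => (u, x (pj u)) :=
      continuous_id.prodMk (x.continuous.comp hpj)
    exact (hf i).comp hm.continuousOn (fun u hu => ⟨hu, trivial⟩)
  have hint : ∀ i a b, 0 ≤ a → a ≤ b →
      IntervalIntegrable (fun u => f i u (x (pj u))) volume a b := by
    intro i a b ha hab
    apply ContinuousOn.intervalIntegrable
    rw [Set.uIcc_of_le hab]
    exact (hcont i).mono fun u hu => ha.trans hu.1
  have hbi : IntervalIntegrable (fun t => A t * Pm + B) volume 0 t₀ :=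
    (hA_int.mul_const Pm).add intervalIntegrable_const
  have hKint : ∫ t in (0:ℝ)..t₀, (A t * Pm + B) = K := by
    rw [intervalIntegral.integral_add (hA_int.mul_const Pm) intervalIntegrable_const,
      intervalIntegral.integral_mul_const, intervalIntegral.integral_const]
    simp [hK]
  have hpt1 : ∀ i, i < n → ∀ s ∈ Set.Icc (0:ℝ) t₀, |f i s (x (pj s))| ≤ A s * Pm + B := by
    intro i hi s hs
    refine (abs_le_semS hi (fun i => f i s (x (pj s)))).trans ((hgrowth1 s hs _).trans ?_)
    have := mul_le_mul_of_nonneg_left (le_Psem t₀ n x hs) (hA_nonneg s hs)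
    linarith
  -- bound on [0,t₀]
  have hI1 : ∀ i, i < n → ∀ s ∈ Set.Icc (0:ℝ) t₀, |∫ u in (0:ℝ)..s, f i u (x (pj u))| ≤ K := by
    intro i hi s hs
    calc |∫ u in (0:ℝ)..s, f i u (x (pj u))|
        ≤ ∫ u in (0:ℝ)..s, |f i u (x (pj u))| :=
          intervalIntegral.abs_integral_le_integral_abs hs.1
      _ ≤ ∫ u in (0:ℝ)..t₀, |f i u (x (pj u))| := by
          apply intervalIntegral.integral_mono_interval le_rfl hs.1 hs.2
          · exact Filter.Eventually.of_forall fun _ => abs_nonneg _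
          · exact (hint i 0 t₀ le_rfl ht₀.le).abs
      _ ≤ ∫ t in (0:ℝ)..t₀, (A t * Pm + B) :=
          intervalIntegral.integral_mono_on ht₀.le (hint i 0 t₀ le_rfl ht₀.le).abs hbi
            (hpt1 i hi)
      _ = K := hKint
  -- bound on [t₀,tp]
  have hI2 : ∀ i, i < n → ∀ t ∈ Set.Icc t₀ tp, |∫ u in t₀..t, f i u (x (pj u))| ≤
      C * (Q * ((Real.exp (θ * (t - t₀)) - 1) / θ) + (t - t₀)) := by
    intro i hi t ht
    have hc : Continuous fun s => C * (Real.exp (θ * (s - t₀)) * Q + 1) := by fun_prop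
    calc |∫ u in t₀..t, f i u (x (pj u))|
        ≤ ∫ u in t₀..t, |f i u (x (pj u))| :=
          intervalIntegral.abs_integral_le_integral_abs ht.1
      _ ≤ ∫ s in t₀..t, C * (Real.exp (θ * (s - t₀)) * Q + 1) := by
          apply intervalIntegral.integral_mono_on ht.1 (hint i t₀ t ht₀.le ht.1).abs
            (hc.intervalIntegrable _ _)
          intro s hs
          have hs' : s ∈ Set.Icc t₀ tp := ⟨hs.1, hs.2.trans ht.2⟩
          refine (abs_le_semS hi (fun i => f i s (x (pj s)))).trans ((hgrowth2 s hs' _).trans ?_)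
          have := le_Qsem t₀ tp θ ht₀.le n x hs'
          gcongr
      _ = _ := by
          rw [intervalIntegral.integral_const_mul, intervalIntegral.integral_add
            (Continuous.intervalIntegrable (by fun_prop) _ _) intervalIntegrable_const,
            intervalIntegral.integral_mul_const, integral_exp_shift t₀ t θ hθ,
            intervalIntegral.integral_const]
          simp [mul_comm]
  have hG1 : 0 ≤ Gconst t₀ α n := by
    unfold Gconst
    have := mul_nonneg (semS_nonneg n (fun i => (1 - α i 1)⁻¹)) (semS_nonneg n (fun i => ‖α i‖))
    linarith
  have htt : 0 ≤ tp - t₀ := by linarith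
  have hR0 : 0 ≤ Gconst t₀ α n * K + C * (Q / θ + (tp - t₀)) := by positivity
  refine Real.iSup_le (fun t => ?_) hR0
  set E := Real.exp (θ * (t.1 - t₀)) with hE
  have hE1 : 1 ≤ E := Real.one_le_exp (mul_nonneg hθ.le (sub_nonneg.2 t.2.1))
  have hEn : Real.exp (-θ * (t.1 - t₀)) = E⁻¹ := by rw [hE, ← Real.exp_neg]; ring_nf
  have hEpos : 0 < E := Real.exp_pos _
  rw [hEn, inv_mul_le_iff₀ hEpos]
  refine Real.iSup_le (fun i => ?_) (by positivity)
  obtain ⟨P, hP, hTx⟩ := hT x i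
  rw [hTx]
  have hPn : ‖P‖ ≤ K := by
    rw [ContinuousMap.norm_le _ hK0]
    intro s
    rw [hP s, Real.norm_eq_abs]
    exact hI1 i i.2 s s.2
  have hαP : |α i P| ≤ semS n (fun i => ‖α i‖) * K := by
    have h1 : ‖α i‖ ≤ semS n (fun i => ‖α i‖) := by
      have := abs_le_semS i.2 (fun i => ‖α i‖)
      exact (le_abs_self _).trans this
    have h2 : |α i P| ≤ ‖α i‖ * ‖P‖ := (α i).le_opNorm P
    exact h2.trans (mul_le_mul h1 hPn (norm_nonneg _) (semS_nonneg _ _))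
  have hfirst : |(1 - α i 1)⁻¹ * α i P| ≤
      semS n (fun i => (1 - α i 1)⁻¹) * (semS n (fun i => ‖α i‖) * K) := by
    rw [abs_mul]
    exact mul_le_mul (abs_le_semS i.2 (fun i => (1 - α i 1)⁻¹)) hαP (abs_nonneg _)
      (semS_nonneg _ _)
  have hsplit : ∫ s in (0:ℝ)..t.1, f i s (x (pj s)) =
      (∫ s in (0:ℝ)..t₀, f i s (x (pj s))) + ∫ s in t₀..t.1, f i s (x (pj s)) :=
    (intervalIntegral.integral_add_adjacent_intervals (hint i 0 t₀ le_rfl ht₀.le)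
      (hint i t₀ t.1 ht₀.le t.2.1)).symm
  have hb1 := hI1 i i.2 t₀ ⟨ht₀.le, le_rfl⟩
  have hb2 := hI2 i i.2 t.1 t.2
  have hGK : |(1 - α i 1)⁻¹ * α i P| + |∫ s in (0:ℝ)..t₀, f i s (x (pj s))| ≤
      Gconst t₀ α n * K := by
    unfold Gconst
    linarith
  have hfin2 : C * (Q * ((E - 1) / θ) + (t.1 - t₀)) ≤ E * (C * (Q / θ + (tp - t₀))) := by
    have e1 : Q * ((E - 1) / θ) ≤ E * (Q / θ) := by
      have : Q * ((E - 1) / θ) = E * (Q / θ) - Q / θ := by ring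
      have := div_nonneg hQ0 hθ.le
      linarith
    have e2 : t.1 - t₀ ≤ E * (tp - t₀) := by
      have := t.2.2
      nlinarith
    calc _ ≤ C * (E * (Q / θ) + E * (tp - t₀)) := by gcongr
      _ = _ := by ring
  have hfin1 : Gconst t₀ α n * K ≤ E * (Gconst t₀ α n * K) :=
    le_mul_of_one_le_left (mul_nonneg hG1 hK0) hE1
  rw [hsplit, ← add_assoc]
  have t1 := abs_add_le ((1 - α i 1)⁻¹ * α i P + ∫ s in (0:ℝ)..t₀, f i s (x (pj s)))
    (∫ s in t₀..t.1, f i s (x (pj s)))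
  have t2 := abs_add_le ((1 - α i 1)⁻¹ * α i P) (∫ s in (0:ℝ)..t₀, f i s (x (pj s)))
  rw [mul_add]
  linarith
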